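/- Let A ∈ ℝ^{n×d} have full column rank, let b ∈ ℝⁿ, let ε ∈ (0,1), and suppose y' ∈ ℝ^d satisfies ‖Ay' − b‖₂ ≤ (1+ε)·min_{y ∈ ℝ^d} ‖Ay − b‖₂. Then ‖y'‖₂ ≤ 2√ε · σ_min(A)^{-1} · min_{y ∈ ℝ^d} ‖Ay − b‖₂ + σ_min(A)^{-1} · ‖b‖₂. -/

import Mathlib

open Matrix
open scoped BigOperators

/-- The Euclidean (`ℓ₂`) norm of a vector in `ℝ^n`. -/
noncomputable def vnorm {n : ℕ} (v : Fin n → ℝ) : ℝ :=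
  Real.sqrt (∑ i, v i ^ 2)

/-- The minimum singular value `σ_min(A) = min_{‖x‖₂ = 1} ‖Ax‖₂`. -/
noncomputable def sigmaMin {n d : ℕ} (A : Matrix (Fin n) (Fin d) ℝ) : ℝ :=
  sInf {c : ℝ | ∃ x : Fin d → ℝ, vnorm x = 1 ∧ c = vnorm (A.mulVec x)}

/-- The maximum singular value (spectral / operator norm)
`σ_max(A) = ‖A‖ = max_{‖x‖₂ = 1} ‖Ax‖₂`. -/
noncomputable def sigmaMax {n d : ℕ} (A : Matrix (Fin n) (Fin d) ℝ) : ℝ :=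
  sSup {c : ℝ | ∃ x : Fin d → ℝ, vnorm x = 1 ∧ c = vnorm (A.mulVec x)}

/-- The condition number `κ(A) = σ_max(A) / σ_min(A)`. -/
noncomputable def kappa {n d : ℕ} (A : Matrix (Fin n) (Fin d) ℝ) : ℝ :=
  sigmaMax A / sigmaMin A

/-!
Let `P` be the orthogonal projection onto the range of `A` and `m = ‖P b - b‖` the optimal residual.
By Pythagoras, `‖A y' - P b‖² = ‖A y' - b‖² - m² ≤ ε (ε + 2) m²`, so `A y'` lies within
`√(ε (ε + 2)) m` of `P b`, and `‖P b‖ ≤ ‖b‖`. Dividing by `σ_min(A)` bounds `y'` itself.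
-/

section InnerProductSpace

variable {𝕜 E : Type*} [RCLike 𝕜] [NormedAddCommGroup E] [InnerProductSpace 𝕜 E]
  (U : Submodule 𝕜 E) [U.HasOrthogonalProjection]

theorem norm_starProjection_sub_eq_infDist (b : E) :
    ‖U.starProjection b - b‖ = Metric.infDist b U := by
  rw [norm_sub_rev, Submodule.starProjection_minimal, Metric.infDist_eq_iInf]
  simp only [dist_eq_norm, SetLike.coe_sort_coe]

theorem norm_sub_sq_eq_norm_sub_starProjection_sq_add_infDist_sq {v : E} (hv : v ∈ U) (b : E) :
    ‖v - b‖ ^ 2 = ‖v - U.starProjection b‖ ^ 2 + Metric.infDist b U ^ 2 := by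
  have hpar : U.starProjection (v - b) = v - U.starProjection b := by
    rw [map_sub, Submodule.starProjection_eq_self_iff.mpr hv]
  have hperp : Uᗮ.starProjection (v - b) = U.starProjection b - b := by
    rw [Submodule.starProjection_orthogonal_val, hpar]
    abel
  rw [U.norm_sq_eq_add_norm_sq_starProjection, hpar, hperp, norm_starProjection_sub_eq_infDist]

variable {U}

theorem norm_sub_starProjection_le_of_norm_sub_le {v b : E} (hv : v ∈ U) {ε : ℝ}
    (h : ‖v - b‖ ≤ (1 + ε) * Metric.infDist b U) :
    ‖v - U.starProjection b‖ ≤ √(ε * (ε + 2)) * Metric.infDist b U := by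
  have hsq : ‖v - U.starProjection b‖ ^ 2 ≤ ε * (ε + 2) * Metric.infDist b U ^ 2 := by
    have hpyth := norm_sub_sq_eq_norm_sub_starProjection_sq_add_infDist_sq U hv b
    have hle : ‖v - b‖ ^ 2 ≤ ((1 + ε) * Metric.infDist b U) ^ 2 := by gcongr
    linarith
  calc ‖v - U.starProjection b‖ ≤ √(ε * (ε + 2) * Metric.infDist b U ^ 2) :=
        Real.le_sqrt_of_sq_le hsq
    _ = √(ε * (ε + 2)) * Metric.infDist b U := by
        rw [Real.sqrt_mul' _ (sq_nonneg _), Real.sqrt_sq Metric.infDist_nonneg]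

theorem norm_le_of_norm_sub_le_mul_infDist {v b : E} (hv : v ∈ U) {ε : ℝ}
    (h : ‖v - b‖ ≤ (1 + ε) * Metric.infDist b U) :
    ‖v‖ ≤ √(ε * (ε + 2)) * Metric.infDist b U + ‖b‖ :=
  calc ‖v‖ ≤ ‖v - U.starProjection b‖ + ‖U.starProjection b‖ := norm_le_norm_sub_add _ _
    _ ≤ √(ε * (ε + 2)) * Metric.infDist b U + ‖b‖ :=
        add_le_add (norm_sub_starProjection_le_of_norm_sub_le hv h)
          (U.norm_starProjection_apply_le b)

end InnerProductSpace

theorem vnorm_eq_norm_toLp {n : ℕ} (v : Fin n → ℝ) : vnorm v = ‖WithLp.toLp 2 v‖ := by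
  simp [vnorm, EuclideanSpace.norm_eq]

theorem vnorm_nonneg {n : ℕ} (v : Fin n → ℝ) : 0 ≤ vnorm v :=
  Real.sqrt_nonneg _

theorem vnorm_smul {n : ℕ} (c : ℝ) (v : Fin n → ℝ) : vnorm (c • v) = |c| * vnorm v := by
  simp only [vnorm_eq_norm_toLp, WithLp.toLp_smul, norm_smul, Real.norm_eq_abs]

theorem vnorm_pos {n : ℕ} {v : Fin n → ℝ} (hv : v ≠ 0) : 0 < vnorm v := by
  simpa [vnorm_eq_norm_toLp] using hv

theorem vnorm_inv_smul_self {n : ℕ} {v : Fin n → ℝ} (hv : v ≠ 0) :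
    vnorm ((vnorm v)⁻¹ • v) = 1 := by
  rw [vnorm_smul, abs_of_pos (inv_pos.mpr (vnorm_pos hv)), inv_mul_cancel₀ (vnorm_pos hv).ne']

theorem mulVec_injective_iff_rank_eq_card {m n K : Type*} [Fintype n] [Field K]
    {A : Matrix m n K} : Function.Injective A.mulVec ↔ A.rank = Fintype.card n := by
  rw [Matrix.mulVec_injective_iff, linearIndependent_iff_card_eq_finrank_span, Set.finrank,
    ← Matrix.rank_eq_finrank_span_cols, eq_comm]

section Matrix

variable {n d : ℕ} {A : Matrix (Fin n) (Fin d) ℝ}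

theorem exists_pos_vnorm_le_mul_vnorm_mulVec (hA : Function.Injective A.mulVec) :
    ∃ K : ℝ, 0 < K ∧ ∀ x, vnorm x ≤ K * vnorm (A *ᵥ x) := by
  have hker : LinearMap.ker A.toEuclideanLin = ⊥ :=
    LinearMap.ker_eq_bot.mpr fun x y hxy ↦
      WithLp.ofLp_injective 2 (hA (congrArg WithLp.ofLp hxy))
  obtain ⟨K, hK, hanti⟩ := LinearMap.exists_antilipschitzWith _ hker
  refine ⟨K, hK, fun x ↦ ?_⟩
  simpa [vnorm_eq_norm_toLp] using hanti.le_mul_dist (WithLp.toLp 2 x) 0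

theorem sigmaMin_nonneg (A : Matrix (Fin n) (Fin d) ℝ) : 0 ≤ sigmaMin A := by
  apply Real.sInf_nonneg
  rintro _ ⟨x, _, rfl⟩
  exact vnorm_nonneg _

theorem sigmaMin_pos [NeZero d] (hA : Function.Injective A.mulVec) : 0 < sigmaMin A := by
  obtain ⟨K, hK, hle⟩ := exists_pos_vnorm_le_mul_vnorm_mulVec hA
  have hunit := vnorm_inv_smul_self (one_ne_zero : (1 : Fin d → ℝ) ≠ 0)
  refine (inv_pos.mpr hK).trans_le (le_csInf ⟨_, _, hunit, rfl⟩ ?_)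
  rintro _ ⟨x, hx, rfl⟩
  rw [inv_le_iff_one_le_mul₀' hK, ← hx]
  exact hle x

theorem sigmaMin_mul_vnorm_le (A : Matrix (Fin n) (Fin d) ℝ) (x : Fin d → ℝ) :
    sigmaMin A * vnorm x ≤ vnorm (A *ᵥ x) := by
  rcases eq_or_ne x 0 with rfl | hx
  · simp [vnorm]
  have hle : sigmaMin A ≤ vnorm (A *ᵥ ((vnorm x)⁻¹ • x)) := by
    refine csInf_le ⟨0, ?_⟩ ⟨_, vnorm_inv_smul_self hx, rfl⟩
    rintro _ ⟨z, _, rfl⟩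
    exact vnorm_nonneg _
  rwa [Matrix.mulVec_smul, vnorm_smul, abs_of_pos (inv_pos.mpr (vnorm_pos hx)), inv_mul_eq_div,
    le_div_iff₀ (vnorm_pos hx)] at hle

theorem vnorm_le_inv_sigmaMin_mul_vnorm_mulVec (hA : Function.Injective A.mulVec)
    (x : Fin d → ℝ) : vnorm x ≤ (sigmaMin A)⁻¹ * vnorm (A *ᵥ x) := by
  rcases Nat.eq_zero_or_pos d with rfl | hd
  · simp [vnorm]
  · have : NeZero d := ⟨hd.ne'⟩
    rw [le_inv_mul_iff₀ (sigmaMin_pos hA)]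
    exact sigmaMin_mul_vnorm_le A x

theorem sInf_vnorm_mulVec_sub_eq_infDist (A : Matrix (Fin n) (Fin d) ℝ) (b : Fin n → ℝ) :
    sInf {c : ℝ | ∃ y : Fin d → ℝ, c = vnorm (A *ᵥ y - b)} =
      Metric.infDist (WithLp.toLp 2 b) (LinearMap.range A.toEuclideanLin) := by
  have hset : {c : ℝ | ∃ y : Fin d → ℝ, c = vnorm (A *ᵥ y - b)} =
      dist (WithLp.toLp 2 b) '' LinearMap.range A.toEuclideanLin := by
    ext c
    simp [(WithLp.toLp_surjective 2).exists, vnorm_eq_norm_toLp, dist_eq_norm', eq_comm]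
  rw [hset]
  exact (Metric.isGLB_infDist (Submodule.nonempty _)).csInf_eq ((Submodule.nonempty _).image _)

theorem sInf_vnorm_mulVec_sub_nonneg (A : Matrix (Fin n) (Fin d) ℝ) (b : Fin n → ℝ) :
    0 ≤ sInf {c : ℝ | ∃ y : Fin d → ℝ, c = vnorm (A *ᵥ y - b)} := by
  rw [sInf_vnorm_mulVec_sub_eq_infDist]
  exact Metric.infDist_nonneg

theorem vnorm_mulVec_le_of_vnorm_mulVec_sub_le {b : Fin n → ℝ} {ε : ℝ} {y : Fin d → ℝ}
    (hy : vnorm (A *ᵥ y - b) ≤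
      (1 + ε) * sInf {c : ℝ | ∃ z : Fin d → ℝ, c = vnorm (A *ᵥ z - b)}) :
    vnorm (A *ᵥ y) ≤
      √(ε * (ε + 2)) * sInf {c : ℝ | ∃ z : Fin d → ℝ, c = vnorm (A *ᵥ z - b)} + vnorm b := by
  rw [sInf_vnorm_mulVec_sub_eq_infDist] at hy ⊢
  simp only [vnorm_eq_norm_toLp, WithLp.toLp_sub] at hy ⊢
  have hmem : WithLp.toLp 2 (A *ᵥ y) ∈ LinearMap.range A.toEuclideanLin := ⟨WithLp.toLp 2 y, rfl⟩
  exact norm_le_of_norm_sub_le_mul_infDist hmem hy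

theorem approx_least_squares_solution_norm_general (hrank : A.rank = d) {b : Fin n → ℝ} {ε : ℝ}
    {y' : Fin d → ℝ}
    (hy : vnorm (A *ᵥ y' - b) ≤
      (1 + ε) * sInf {c : ℝ | ∃ y : Fin d → ℝ, c = vnorm (A *ᵥ y - b)}) :
    vnorm y' ≤
      √(ε * (ε + 2)) * (sigmaMin A)⁻¹ *
          sInf {c : ℝ | ∃ y : Fin d → ℝ, c = vnorm (A *ᵥ y - b)} +
        (sigmaMin A)⁻¹ * vnorm b := by
  have hA : Function.Injective A.mulVec :=
    mulVec_injective_iff_rank_eq_card.mpr (by rw [hrank, Fintype.card_fin])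
  have hσ : 0 ≤ (sigmaMin A)⁻¹ := inv_nonneg.mpr (sigmaMin_nonneg A)
  calc vnorm y' ≤ (sigmaMin A)⁻¹ * vnorm (A *ᵥ y') :=
        vnorm_le_inv_sigmaMin_mul_vnorm_mulVec hA y'
    _ ≤ (sigmaMin A)⁻¹ *
          (√(ε * (ε + 2)) * sInf {c : ℝ | ∃ y : Fin d → ℝ, c = vnorm (A *ᵥ y - b)} + vnorm b) :=
        mul_le_mul_of_nonneg_left (vnorm_mulVec_le_of_vnorm_mulVec_sub_le hy) hσ
    _ = _ := by ring

end Matrix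

theorem sqrt_mul_add_two_le {ε : ℝ} (h₀ : 0 ≤ ε) (h₂ : ε ≤ 2) : √(ε * (ε + 2)) ≤ 2 * √ε := by
  refine Real.sqrt_le_iff.mpr ⟨by positivity, ?_⟩
  rw [mul_pow, Real.sq_sqrt h₀]
  nlinarith

/-- Norm bound on an approximate least-squares solution: if `A` has full
column rank and `y'` is a `(1+ε)`-approximate minimizer of `‖Ay - b‖₂`, then
`‖y'‖₂ ≤ 2√ε·σ_min(A)⁻¹·min_y ‖Ay - b‖₂ + σ_min(A)⁻¹·‖b‖₂`. -/
theorem approx_least_squares_solution_norm {n d : ℕ} (A : Matrix (Fin n) (Fin d) ℝ)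
    (hrank : A.rank = d) (b : Fin n → ℝ) (ε : ℝ) (hε : ε ∈ Set.Ioo (0 : ℝ) 1)
    (y' : Fin d → ℝ)
    (hy : vnorm (A.mulVec y' - b)
        ≤ (1 + ε) * sInf {c : ℝ | ∃ y : Fin d → ℝ, c = vnorm (A.mulVec y - b)}) :
    vnorm y'
      ≤ 2 * Real.sqrt ε * (sigmaMin A)⁻¹
          * sInf {c : ℝ | ∃ y : Fin d → ℝ, c = vnorm (A.mulVec y - b)}
        + (sigmaMin A)⁻¹ * vnorm b := by
  have hσ := inv_nonneg.mpr (sigmaMin_nonneg A)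
  have hm := sInf_vnorm_mulVec_sub_nonneg A b
  have hsqrt := sqrt_mul_add_two_le hε.1.le (hε.2.le.trans one_le_two)
  exact (approx_least_squares_solution_norm_general hrank hy).trans (by gcongr)
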